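/- Fix l ≥ 1 and κ = (k_1,…,k_l) ∈ (ℤ/2ℤ)^l. For any l-multipartition λ of d, the parity ε(λ) equals the degree of the row-reading standard tableau t^λ modulo 2, i.e. ε(λ) = deg(t^λ) + 2ℤ in ℤ/2ℤ. -/

import Mathlib

/-!
Core definitions: multipartitions, Young diagrams, tableaux, degrees,
in quantum characteristic 2 (residues in ℤ/2ℤ).
Nodes are 0-indexed: the node `(m, a, b)` denotes the box in component `m`,
row `a+1`, column `b+1` of the paper's 1-indexed conventions.
-/

/-- A node: (component, row, column), all 0-indexed. -/
abbrev Node (l : ℕ) := Fin l × ℕ × ℕ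

namespace Cyclo

variable {l d : ℕ}

/-- Residue of a node `(m, a, b)`: `κ m + (b - a)` in `ℤ/2ℤ`. -/
def res (κ : Fin l → ZMod 2) (N : Node l) : ZMod 2 :=
  κ N.1 + (N.2.2 : ZMod 2) - (N.2.1 : ZMod 2)

/-- A set of nodes is (the Young diagram of) a multipartition iff it is
downward closed in rows and columns within each component. -/
def IsDiagram (Y : Set (Node l)) : Prop :=
  ∀ m a b a' b', (m, a, b) ∈ Y → a' ≤ a → b' ≤ b → (m, a', b') ∈ Y

/-- `M` is an addable node for the diagram `Y`. -/
def Addable (Y : Set (Node l)) (M : Node l) : Prop :=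
  M ∉ Y ∧ IsDiagram (insert M Y)

/-- `M` is a removable node of the diagram `Y`. -/
def Removable (Y : Set (Node l)) (M : Node l) : Prop :=
  M ∈ Y ∧ IsDiagram (Y \ {M})

/-- `M` is below `N`: strictly later component, or same component and strictly lower row. -/
def Below (N M : Node l) : Prop :=
  N.1 < M.1 ∨ (N.1 = M.1 ∧ N.2.1 < M.2.1)

/-- `d_N(Y)`: number of addable nodes for `Y` below `N` of the same residue as `N`,
minus the number of removable nodes of `Y` below `N` of the same residue as `N`. -/
noncomputable def dN (κ : Fin l → ZMod 2) (Y : Set (Node l)) (N : Node l) : ℤ :=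
  ({M | Addable Y M ∧ res κ M = res κ N ∧ Below N M}.ncard : ℤ)
    - ({M | Removable Y M ∧ res κ M = res κ N ∧ Below N M}.ncard : ℤ)

/-- The Young diagram of the multipartition whose parts are `lam m a` (0-indexed rows). -/
def diagram (lam : Fin l → ℕ → ℕ) : Set (Node l) :=
  {N | N.2.2 < lam N.1 N.2.1}

/-- `lam` encodes an `l`-multipartition of `d`: each component is a partition
(antitone, vanishing beyond row `d`) and the sizes sum to `d`. -/
def IsMultipartition (lam : Fin l → ℕ → ℕ) (d : ℕ) : Prop :=
  (∀ m, Antitone (lam m)) ∧ (∀ m a, d ≤ a → lam m a = 0) ∧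
    ∑ m : Fin l, ∑ a ∈ Finset.range d, lam m a = d

/-- A λ-tableau, encoded by the function sending `r : Fin d` to the node
occupied by the entry `r + 1`: a bijective filling of the diagram by `1, …, d`. -/
def IsTableau (lam : Fin l → ℕ → ℕ) (t : Fin d → Node l) : Prop :=
  Function.Injective t ∧ Set.range t = diagram lam

/-- A standard λ-tableau: entries increase along rows and down columns of each
component. -/
def IsStandard (lam : Fin l → ℕ → ℕ) (t : Fin d → Node l) : Prop :=
  IsTableau lam t ∧
    ∀ r s : Fin d, (t r).1 = (t s).1 → (t r).2.1 ≤ (t s).2.1 →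
      (t r).2.2 ≤ (t s).2.2 → r ≤ s

/-- Lexicographic (row-reading) order on nodes. -/
def NodeLt (N M : Node l) : Prop :=
  N.1 < M.1 ∨ (N.1 = M.1 ∧ (N.2.1 < M.2.1 ∨ (N.2.1 = M.2.1 ∧ N.2.2 < M.2.2)))

/-- The row-reading tableau `t^λ`: entries `1, …, d` are filled along successive
rows of the components of `λ`, taking the components in order. -/
def IsRowReading (lam : Fin l → ℕ → ℕ) (t : Fin d → Node l) : Prop :=
  IsTableau lam t ∧ ∀ r s : Fin d, r < s → NodeLt (t r) (t s)

/-- The degree of a (standard) tableau: `deg t = Σ_r d_{N_r}(shape of t_{≤ r})`,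
which unfolds the recursion `deg t = d_N(λ) + deg (t_{≤ d-1})`, `deg ∅ = 0`. -/
noncomputable def deg (κ : Fin l → ZMod 2) (t : Fin d → Node l) : ℤ :=
  ∑ r : Fin d, dN κ (t '' {s | s ≤ r}) (t r)

/-- `ε` of a single partition (the sum of `⌊λ_a/2⌋` over rows), as a natural number. -/
def epsPart (d : ℕ) (p : ℕ → ℕ) : ℕ :=
  ∑ a ∈ Finset.range d, p a / 2

/-- `n_i` of a single partition `p` placed in a component with offset `k`:
the number of nodes `(a,b)` of `p` with `k + b - a = i` in `ℤ/2ℤ`. -/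
noncomputable def nNodes (k i : ZMod 2) (p : ℕ → ℕ) : ℕ :=
  {N : ℕ × ℕ | N.2 < p N.1 ∧ k + (N.2 : ZMod 2) - (N.1 : ZMod 2) = i}.ncard

/-- The parity `ε(λ)` of an `l`-multipartition. -/
noncomputable def eps (κ : Fin l → ZMod 2) (d : ℕ) (lam : Fin l → ℕ → ℕ) : ZMod 2 :=
  ((∑ m : Fin l, epsPart d (lam m) : ℕ) : ZMod 2) +
    ((∑ j : Fin l, ∑ m : Fin l, if j < m then nNodes (κ j) (κ m) (lam j) else 0 : ℕ) : ZMod 2)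

end Cyclo

namespace Cyclo

theorem image_le_eq {l d : ℕ} (lam : Fin l → ℕ → ℕ) (t : Fin d → Node l)
    (ht : IsRowReading lam t) (r : Fin d) :
    t '' {s | s ≤ r} = {M | M ∈ diagram lam ∧ ¬ NodeLt (t r) M} := by
  obtain ⟨⟨_, hr⟩, hlt⟩ := ht
  ext M
  constructor
  · rintro ⟨s, hs, rfl⟩
    refine ⟨hr ▸ ⟨s, rfl⟩, fun h => ?_⟩
    rcases lt_or_eq_of_le (show s ≤ r from hs) with h1 | h1
    · have h2 := hlt _ _ h1
      unfold NodeLt at h h2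
      omega
    · subst h1
      unfold NodeLt at h
      omega
  · rintro ⟨hM, hn⟩
    rw [← hr] at hM
    obtain ⟨s, rfl⟩ := hM
    refine ⟨s, ?_, rfl⟩
    by_contra hs
    exact hn (hlt _ _ (not_le.mp hs))

theorem addable_iff {l : ℕ} (lam : Fin l → ℕ → ℕ) (hlam : ∀ m, Antitone (lam m))
    (N : Node l) (hN : N ∈ diagram lam) (M : Node l) :
    (Addable {M | M ∈ diagram lam ∧ ¬ NodeLt N M} M ∧ Below N M) ↔
      (M = (N.1, N.2.1 + 1, 0) ∨ (N.1 < M.1 ∧ M.2 = (0, 0))) := by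
  obtain ⟨m, a, b⟩ := N
  obtain ⟨m', a', b'⟩ := M
  simp only [diagram, Set.mem_setOf_eq] at hN
  constructor
  · rintro ⟨⟨h1, h2⟩, h3⟩
    simp only [Below] at h3
    rcases h3 with h3 | ⟨rfl, h3⟩
    · right
      have := h2 m' a' b' 0 0 (Set.mem_insert _ _) (Nat.zero_le _) (Nat.zero_le _)
      rcases this with h | h
      · simp only [Prod.mk.injEq] at h ⊢
        exact ⟨h3, h.2.1.symm, h.2.2.symm⟩
      · exact absurd (Or.inl h3) h.2
    · left
      have := h2 m a' b' (a + 1) 0 (Set.mem_insert _ _) h3 (Nat.zero_le _)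
      rcases this with h | h
      · exact h.symm
      · exact absurd (Or.inr ⟨rfl, Or.inl (Nat.lt_succ_self a)⟩) h.2
  · rintro (h | ⟨h, h'⟩)
    · simp only [Prod.mk.injEq] at h
      obtain ⟨rfl, rfl, rfl⟩ := h
      refine ⟨⟨fun h => h.2 (Or.inr ⟨rfl, Or.inl (Nat.lt_succ_self a)⟩), ?_⟩,
        Or.inr ⟨rfl, Nat.lt_succ_self a⟩⟩
      intro n x y x' y' hxy hx hy
      simp only [Set.mem_insert_iff, Prod.mk.injEq, Set.mem_setOf_eq, diagram, NodeLt] at hxy ⊢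
      rcases hxy with ⟨rfl, rfl, rfl⟩ | ⟨h1, h2⟩
      · rcases Nat.lt_or_ge x' (a + 1) with h | h
        · right
          have := hlam n (show x' ≤ a by omega)
          refine ⟨by omega, by omega⟩
        · left
          exact ⟨rfl, by omega, by omega⟩
      · right
        have := hlam n hx
        refine ⟨by omega, by omega⟩
    · simp only [Prod.mk.injEq] at h h'
      obtain ⟨rfl, rfl⟩ := h'
      refine ⟨⟨fun h1 => h1.2 (Or.inl h), ?_⟩, Or.inl h⟩
      intro n x y x' y' hxy hx hy
      simp only [Set.mem_insert_iff, Prod.mk.injEq, Set.mem_setOf_eq, diagram, NodeLt] at hxy ⊢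
      rcases hxy with ⟨rfl, rfl, rfl⟩ | ⟨h1, h2⟩
      · left
        exact ⟨rfl, by omega, by omega⟩
      · right
        have := hlam n hx
        refine ⟨by omega, by omega⟩

theorem res_iff {l : ℕ} (κ : Fin l → ZMod 2) (m : Fin l) (a b : ℕ) :
    res κ (m, a + 1, 0) = res κ (m, a, b) ↔ b % 2 = 1 := by
  have e : (b % 2 = 1) ↔ (b : ZMod 2) = 1 := by
    rw [← Nat.odd_iff, ← ZMod.natCast_eq_one_iff_odd]
  rw [e]
  simp only [res]
  push_cast
  generalize κ m = k
  generalize (a : ZMod 2) = x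
  generalize (b : ZMod 2) = y
  revert k x y
  decide

/-- value of the degree increment -/
def fval {l : ℕ} (κ : Fin l → ZMod 2) (m : Fin l) (a b : ℕ) : ℕ :=
  (if b % 2 = 1 then 1 else 0) +
    ∑ m' : Fin l, if m < m' then
      (if κ m + (b : ZMod 2) - (a : ZMod 2) = κ m' then 1 else 0) else 0

theorem dN_eq {l : ℕ} (κ : Fin l → ZMod 2) (lam : Fin l → ℕ → ℕ)
    (hlam : ∀ m, Antitone (lam m)) (N : Node l) (hN : N ∈ diagram lam) :
    dN κ {M | M ∈ diagram lam ∧ ¬ NodeLt N M} N = (fval κ N.1 N.2.1 N.2.2 : ℤ) := by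
  obtain ⟨m, a, b⟩ := N
  have hrem : {M | Removable {M | M ∈ diagram lam ∧ ¬ NodeLt (m, a, b) M} M ∧
      res κ M = res κ (m, a, b) ∧ Below (m, a, b) M} = ∅ := by
    ext M
    simp only [Set.mem_setOf_eq, Set.mem_empty_iff_false, iff_false]
    rintro ⟨h1, _, h3⟩
    apply h1.1.2
    rcases h3 with h | ⟨h, h'⟩
    · exact Or.inl h
    · exact Or.inr ⟨h, Or.inl h'⟩
  have hadd : {M | Addable {M | M ∈ diagram lam ∧ ¬ NodeLt (m, a, b) M} M ∧
      res κ M = res κ (m, a, b) ∧ Below (m, a, b) M} =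
      (((if b % 2 = 1 then {(m, a + 1, 0)} else ∅) ∪
        ((Finset.univ.filter fun m' => m < m' ∧ κ m + (b : ZMod 2) - (a : ZMod 2) = κ m').image
          fun m' => (m', 0, 0)) : Finset (Node l)) : Set (Node l)) := by
    ext M
    have key := addable_iff lam hlam (m, a, b) hN M
    have e : (Addable {M | M ∈ diagram lam ∧ ¬ NodeLt (m, a, b) M} M ∧
      res κ M = res κ (m, a, b) ∧ Below (m, a, b) M) ↔ 
      ((M = (m, a + 1, 0) ∨ (m < M.1 ∧ M.2 = (0, 0))) ∧ res κ M = res κ (m, a, b)) := by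
      rw [← key]; tauto
    simp only [Set.mem_setOf_eq]
    rw [e]
    simp only [Finset.coe_union, Set.mem_union, Finset.mem_coe, Finset.mem_image,
      Finset.mem_filter, Finset.mem_univ, true_and]
    constructor
    · rintro ⟨rfl | ⟨h1, h2⟩, h3⟩
      · left
        rw [if_pos ((res_iff κ m a b).1 h3)]
        simp
      · right
        obtain ⟨m', x⟩ := M
        simp only at h1 h2
        subst h2
        refine ⟨m', ⟨h1, ?_⟩, rfl⟩
        simp [res] at h3
        exact h3.symm
    · rintro (h | ⟨m', ⟨h1, h2⟩, rfl⟩)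
      · split_ifs at h with hb
        · rw [Finset.mem_singleton] at h
          subst h
          exact ⟨Or.inl rfl, (res_iff κ m a b).2 hb⟩
        · simp at h
      · refine ⟨Or.inr ⟨h1, rfl⟩, ?_⟩
        simp [res, h2]
  unfold dN
  rw [hrem, hadd, Set.ncard_coe_finset, Finset.card_union_of_disjoint, Finset.card_image_of_injective]
  · simp only [Set.ncard_empty, fval, Finset.card_filter, ← ite_and]
    split_ifs <;> simp
  · intro x y h
    simpa using h
  · rw [Finset.disjoint_left]
    intro x hx hx'
    split_ifs at hx
    · simp at hx hx'
      subst hx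
      simp at hx'
    · simp at hx

theorem sum_odd (n : ℕ) : ∑ b ∈ Finset.range n, (if b % 2 = 1 then 1 else 0) = n / 2 := by
  induction n with
  | zero => rfl
  | succ n ih => rw [Finset.sum_range_succ, ih]; split_ifs <;> omega

theorem nNodes_eq (k i : ZMod 2) (p : ℕ → ℕ) (d : ℕ) (hp : ∀ a, d ≤ a → p a = 0) :
    nNodes k i p = ∑ a ∈ Finset.range d, ∑ b ∈ Finset.range (p a),
      if k + (b : ZMod 2) - (a : ZMod 2) = i then 1 else 0 := by
  have : {N : ℕ × ℕ | N.2 < p N.1 ∧ k + (N.2 : ZMod 2) - (N.1 : ZMod 2) = i} =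
      (((((Finset.range d).sigma fun a => Finset.range (p a)).filter
        fun x => k + (x.2 : ZMod 2) - (x.1 : ZMod 2) = i).image
        fun x => (x.1, x.2) : Finset (ℕ × ℕ)) : Set (ℕ × ℕ)) := by
    ext ⟨a, b⟩
    simp only [Set.mem_setOf_eq, Finset.mem_coe, Finset.mem_image, Finset.mem_filter,
      Finset.mem_sigma, Finset.mem_range, Prod.mk.injEq]
    constructor
    · rintro ⟨h1, h2⟩
      refine ⟨⟨a, b⟩, ⟨⟨?_, h1⟩, h2⟩, rfl, rfl⟩
      by_contra h
      have := hp a (not_lt.mp h)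
      omega
    · rintro ⟨⟨a, b⟩, ⟨⟨_, h1⟩, h2⟩, rfl, rfl⟩
      exact ⟨h1, h2⟩
  unfold nNodes
  rw [this, Set.ncard_coe_finset, Finset.card_image_of_injective, Finset.card_filter,
    Finset.sum_sigma]
  rintro ⟨a, b⟩ ⟨a', b'⟩ h
  simp only [Prod.mk.injEq] at h
  obtain ⟨rfl, rfl⟩ := h
  rfl

theorem sum_tab {l d : ℕ} (lam : Fin l → ℕ → ℕ) (hlam : IsMultipartition lam d)
    (t : Fin d → Node l) (ht : IsTableau lam t) (f : Fin l → ℕ → ℕ → ℕ) :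
    ∑ r, f (t r).1 (t r).2.1 (t r).2.2 =
      ∑ m, ∑ a ∈ Finset.range d, ∑ b ∈ Finset.range (lam m a), f m a b := by
  have e : ∀ m : Fin l, ∑ a ∈ Finset.range d, ∑ b ∈ Finset.range (lam m a), f m a b =
      ∑ x ∈ (Finset.range d).sigma (fun a => Finset.range (lam m a)), f m x.1 x.2 := by
    intro m
    rw [Finset.sum_sigma]
  simp only [e]
  rw [Finset.sum_sigma']
  have hmem : ∀ r, (t r).2.2 < lam (t r).1 (t r).2.1 := fun r => by
    have : t r ∈ diagram lam := ht.2 ▸ ⟨r, rfl⟩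
    exact this
  refine Finset.sum_bij (fun r _ => ⟨(t r).1, ⟨(t r).2.1, (t r).2.2⟩⟩) ?_ ?_ ?_ ?_
  · intro r _
    simp only [Finset.mem_sigma, Finset.mem_univ, Finset.mem_range, true_and]
    refine ⟨?_, hmem r⟩
    by_contra h
    have := hlam.2.1 (t r).1 _ (not_lt.mp h)
    have := hmem r
    omega
  · intro r _ s _ h
    apply ht.1
    simp only [Sigma.mk.injEq, heq_eq_eq] at h
    exact Prod.ext h.1 (Prod.ext h.2.1 h.2.2)
  · rintro ⟨m, a, b⟩ h
    simp only [Finset.mem_sigma, Finset.mem_univ, Finset.mem_range, true_and] at h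
    have : (m, a, b) ∈ Set.range t := by
      rw [ht.2]; exact h.2
    obtain ⟨r, hr⟩ := this
    exact ⟨r, Finset.mem_univ _, by rw [hr]⟩
  · intro r _
    rfl

end Cyclo

open Cyclo in
/-- **Lemma 1 of the paper.** For any `l`-multipartition `λ` of `d`
(`l ≥ 1`), the parity `ε(λ) ∈ ℤ/2ℤ` equals the degree of the row-reading
standard tableau `t^λ` modulo 2. -/
theorem statement2 (l d : ℕ) (hl : 1 ≤ l)
    (κ : Fin l → ZMod 2) (lam : Fin l → ℕ → ℕ)
    (hlam : IsMultipartition lam d)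
    (t : Fin d → Node l) (ht : IsRowReading lam t) :
    eps κ d lam = ((deg κ t : ℤ) : ZMod 2) := by
  have h1 : deg κ t = ((∑ r, fval κ (t r).1 (t r).2.1 (t r).2.2 : ℕ) : ℤ) := by
    unfold deg
    rw [Nat.cast_sum]
    refine Finset.sum_congr rfl fun r _ => ?_
    rw [image_le_eq lam t ht r]
    exact dN_eq κ lam hlam.1 (t r) (ht.1.2 ▸ ⟨r, rfl⟩)
  rw [h1, sum_tab lam hlam t ht.1 (fval κ), Int.cast_natCast]
  unfold eps
  rw [← Nat.cast_add]
  congr 1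
  rw [← Finset.sum_add_distrib]
  refine Finset.sum_congr rfl fun m _ => ?_
  simp only [fval, Finset.sum_add_distrib, sum_odd, epsPart]
  congr 1
  simp only [nNodes_eq _ _ (lam m) d (hlam.2.1 m)]
  symm
  calc _ = ∑ a ∈ Finset.range d, ∑ m' : Fin l, ∑ b ∈ Finset.range (lam m a), (if m < m' then
      (if κ m + (b : ZMod 2) - (a : ZMod 2) = κ m' then 1 else 0) else 0) :=
        Finset.sum_congr rfl fun a _ => Finset.sum_comm
    _ = ∑ m' : Fin l, ∑ a ∈ Finset.range d, ∑ b ∈ Finset.range (lam m a), (if m < m' then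
      (if κ m + (b : ZMod 2) - (a : ZMod 2) = κ m' then 1 else 0) else 0) := Finset.sum_comm
    _ = _ := by
      refine Finset.sum_congr rfl fun m' _ => ?_
      split_ifs <;> simp
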